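/- arXiv:2307.13126 — 4 statements merged into one kernel-verified Lean document; each statement's English description precedes it below -/
import Mathlib

section
/- Let K be a field, R = K[x_1,…,x_n], and let M be a finitely generated R-module of finite length. Then there is an R-module isomorphism Ext^n_R(Ext^n_R(M,R),R) ≅ M. -/
open CategoryTheory

/-!
Every maximal ideal of `R = K[x₁, …, xₙ]` is generated by a regular sequence of length `n`: a
maximal ideal of the polynomial ring in one more variable contracts to a maximal ideal below,
because these rings are Jacobson, and it is generated by its contraction together with one monic
polynomial. Hence a simple module `S` has projective dimension at most `n` and satisfies
`Extⁱ(S, R) = 0` for `i < n`, and both properties pass to modules of finite length.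

Let `P` be a resolution of `M` of length `n` by finite projective modules. The cohomology of
`Hom(P, R)` is `Extⁱ(M, R)`, which is concentrated in degree `n`, so `Hom(P, R)` read backwards is
again a projective resolution of length `n`, now of `Extⁿ(M, R)`. Dualizing and reading backwards
once more returns `P`, since finite projective modules are reflexive; comparing homology in degree
`0` gives `Extⁿ(Extⁿ(M, R), R) ≅ M`.
-/

open RingTheory.Sequence Limits

universe u v w

section MaximalIdeals

/-- Every maximal ideal of `R` is generated by a regular sequence of length `n`. Weak regularity
suffices as an encoding: a weakly regular sequence generating a proper ideal of `R` is regular. -/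
def RegularlyGeneratedMaximalIdeals (n : ℕ) (R : Type*) [CommRing R] : Prop :=
  ∀ m : Ideal R, m.IsMaximal →
    ∃ rs : List R, rs.length = n ∧ IsWeaklyRegular R rs ∧ Ideal.ofList rs = m

theorem regularlyGeneratedMaximalIdeals_zero (K : Type*) [Field K] :
    RegularlyGeneratedMaximalIdeals 0 K := fun m _ =>
  ⟨[], rfl, .nil K K, by simpa using (Ideal.eq_bot_of_prime m).symm⟩

theorem RegularlyGeneratedMaximalIdeals.of_ringEquiv {n : ℕ} {R S : Type*} [CommRing R] [CommRing S]
    (h : RegularlyGeneratedMaximalIdeals n R) (e : R ≃+* S) :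
    RegularlyGeneratedMaximalIdeals n S := by
  intro m hm
  obtain ⟨rs, hlen, hreg, hrs⟩ :=
    h (m.comap e) (Ideal.comap_isMaximal_of_surjective e e.surjective)
  refine ⟨rs.map e, by simpa using hlen, (e.toAddEquiv.isWeaklyRegular_congr ?_).1 hreg, ?_⟩
  · exact List.forall₂_map_right_iff.mpr <| List.forall₂_same.mpr fun r _ x => by simp
  · calc Ideal.ofList (rs.map e) = (Ideal.ofList rs).map (e : R →+* S) :=
          (Ideal.map_ofList (e : R →+* S) rs).symm
      _ = m := by rw [hrs]; exact Ideal.map_comap_of_surjective (e : R →+* S) e.surjective m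

open Polynomial

theorem isSMulRegular_quotient_map_C_of_monic {R : Type*} [CommRing R] (I : Ideal R) {f : R[X]}
    (hf : f.Monic) : IsSMulRegular (R[X] ⧸ I.map C) f := by
  have mem_iff (g : R[X]) : g ∈ I.map C ↔ g.map (Ideal.Quotient.mk I) = 0 := by
    rw [← coe_mapRingHom, ← RingHom.mem_ker, ker_mapRingHom, Ideal.mk_ker]
  rw [isSMulRegular_iff_right_eq_zero_of_smul]
  intro x hx
  obtain ⟨g, rfl⟩ := Submodule.Quotient.mk_surjective _ x
  rw [← Submodule.Quotient.mk_smul, Submodule.Quotient.mk_eq_zero,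
    mem_iff, smul_eq_mul, Polynomial.map_mul] at hx
  rw [Submodule.Quotient.mk_eq_zero, mem_iff]
  exact (hf.map _).mul_right_eq_zero_iff.1 hx

theorem not_isMaximal_map_C {R : Type*} [CommRing R] (I : Ideal R) :
    ¬ (I.map (C : R →+* R[X])).IsMaximal := fun h =>
  Polynomial.not_isField (R ⧸ I) <|
    (Ideal.polynomialQuotientEquivQuotientPolynomial I).toMulEquiv.isField
      ((Ideal.Quotient.maximal_ideal_iff_isField_quotient _).1 h)

theorem RegularlyGeneratedMaximalIdeals.polynomial {n : ℕ} {R : Type*} [CommRing R]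
    [IsJacobsonRing R] (h : RegularlyGeneratedMaximalIdeals n R) :
    RegularlyGeneratedMaximalIdeals (n + 1) R[X] := by
  intro m hm
  have hJ : (m.comap C).IsMaximal := isMaximal_comap_C_of_isJacobsonRing m
  obtain ⟨rs, hlen, hreg, hrs⟩ := h _ hJ
  have hm_ne : m ≠ (m.comap C).map C := fun e => not_isMaximal_map_C _ (e ▸ hm)
  obtain ⟨f, hf, hmf⟩ := exists_monic_span_sup_map_eq R m hJ hm_ne
  have hmap : Ideal.ofList (rs.map C) = (m.comap C).map C := by rw [← Ideal.map_ofList, hrs]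
  refine ⟨rs.map C ++ [f], by simpa using hlen, ?_, ?_⟩
  · refine (isWeaklyRegular_append_iff _ _ _).2
      ⟨IsWeaklyRegular.of_flat (S := R[X]) hreg, (isWeaklyRegular_singleton_iff _ _).2 ?_⟩
    rw [hmap, smul_eq_mul, Ideal.mul_top]
    exact isSMulRegular_quotient_map_C_of_monic _ hf
  · rw [Ideal.ofList_append, hmap, Ideal.ofList_singleton, ← hmf]

theorem regularlyGeneratedMaximalIdeals_mvPolynomial (K : Type*) [Field K] (n : ℕ) :
    RegularlyGeneratedMaximalIdeals n (MvPolynomial (Fin n) K) := by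
  induction n with
  | zero =>
    exact (regularlyGeneratedMaximalIdeals_zero K).of_ringEquiv
      (MvPolynomial.isEmptyRingEquiv K _).symm
  | succ n ih => exact ih.polynomial.of_ringEquiv (MvPolynomial.finSuccEquiv K n).symm.toRingEquiv

end MaximalIdeals

section Devissage

theorem hasProjectiveDimensionLE_of_isFiniteLength {R : Type u} [Ring R] {n : ℕ}
    (h : ∀ (S : Type u) [AddCommGroup S] [Module R S] [IsSimpleModule R S],
      HasProjectiveDimensionLE (ModuleCat.of R S) n)
    {M : Type u} [AddCommGroup M] [Module R M] (hM : IsFiniteLength R M) :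
    HasProjectiveDimensionLE (ModuleCat.of R M) n := by
  induction hM with
  | @of_subsingleton M =>
    have := (ModuleCat.isZero_of_subsingleton (ModuleCat.of R M)).hasProjectiveDimensionLT_zero
    exact hasProjectiveDimensionLT_of_ge _ 0 _ (Nat.zero_le _)
  | @of_simple_quotient M _ _ N _ _ ih =>
    have hker : HasProjectiveDimensionLE (ModuleCat.of R (LinearMap.ker N.mkQ)) n := by
      rwa [N.ker_mkQ]
    exact (LinearMap.shortExact_shortComplexKer N.mkQ_surjective).hasProjectiveDimensionLT_X₂ _
      hker (h (M ⧸ N))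

theorem subsingleton_ext_of_isFiniteLength {R : Type u} [Ring R] {Y : ModuleCat.{u} R} {i : ℕ}
    (h : ∀ (S : Type u) [AddCommGroup S] [Module R S] [IsSimpleModule R S],
      Subsingleton (Abelian.Ext (ModuleCat.of R S) Y i))
    {M : Type u} [AddCommGroup M] [Module R M] (hM : IsFiniteLength R M) :
    Subsingleton (Abelian.Ext (ModuleCat.of R M) Y i) := by
  induction hM with
  | @of_subsingleton M =>
    have := (ModuleCat.isZero_of_subsingleton (ModuleCat.of R M)).hasProjectiveDimensionLT_zero
    exact HasProjectiveDimensionLT.subsingleton _ 0 i (Nat.zero_le _) _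
  | @of_simple_quotient M _ _ N _ _ ih =>
    have hker : Subsingleton (Abelian.Ext (ModuleCat.of R (LinearMap.ker N.mkQ)) Y i) := by
      rwa [N.ker_mkQ]
    refine subsingleton_of_forall_eq 0 fun x => ?_
    obtain ⟨y, rfl⟩ := Abelian.Ext.contravariant_sequence_exact₂
      (LinearMap.shortExact_shortComplexKer N.mkQ_surjective) Y x (hker.elim _ _)
    rw [(h (M ⧸ N)).elim y 0, Abelian.Ext.comp_zero]

theorem hasProjectiveDimensionLE_quotient_ofList {R : Type u} [CommRing R] (M : Type v)
    [AddCommGroup M] [Module R M] [Small.{v} R] (k : ℕ)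
    (hM : HasProjectiveDimensionLE (ModuleCat.of R M) k)
    (rs : List R) (reg : IsWeaklyRegular M rs) :
    HasProjectiveDimensionLE
      (ModuleCat.of R (M ⧸ (Ideal.ofList rs • ⊤ : Submodule R M))) (k + rs.length) := by
  induction rs generalizing M k with
  | nil =>
    let e : M ≃ₗ[R] (M ⧸ (Ideal.ofList ([] : List R) • ⊤ : Submodule R M)) :=
      (Submodule.quotEquivOfEqBot _ (by simp)).symm
    exact ModuleCat.hasProjectiveDimensionLE_of_linearEquiv (M := ModuleCat.of R M)
      (N := ModuleCat.of R _) e k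
  | cons r rs ih =>
    rw [isWeaklyRegular_cons_iff] at reg
    have hS := IsSMulRegular.smulShortComplex_shortExact (M := ModuleCat.of R M) reg.1
    have hquot : HasProjectiveDimensionLE (ModuleCat.of R (QuotSMulTop r M)) (k + 1) :=
      hS.hasProjectiveDimensionLT_X₃ (k + 1) hM
        (hasProjectiveDimensionLT_of_ge (ModuleCat.of R M) (k + 1) (k + 2) (by omega))
    have hrest := ih (QuotSMulTop r M) (k + 1) hquot reg.2
    have := ModuleCat.hasProjectiveDimensionLE_of_linearEquiv (M := ModuleCat.of R _)
      (N := ModuleCat.of R _)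
      (Submodule.quotOfListConsSMulTopEquivQuotSMulTopInner M r rs).symm (k + 1 + rs.length)
    rwa [show k + (r :: rs).length = k + 1 + rs.length by simp; omega]

variable {R : Type u} [CommRing R] {n : ℕ}

theorem RegularlyGeneratedMaximalIdeals.hasProjectiveDimensionLE_of_isSimpleModule
    (h : RegularlyGeneratedMaximalIdeals n R) (S : Type u) [AddCommGroup S] [Module R S]
    [IsSimpleModule R S] : HasProjectiveDimensionLE (ModuleCat.of R S) n := by
  obtain ⟨m, hm, ⟨e⟩⟩ := isSimpleModule_iff_quot_maximal.1 ‹IsSimpleModule R S›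
  obtain ⟨rs, rfl, hreg, hrs⟩ := h m hm
  have hR : Projective (ModuleCat.of R R) := (IsProjective.iff_projective R).1 inferInstance
  have hquot := hasProjectiveDimensionLE_quotient_ofList R 0
    ((projective_iff_hasProjectiveDimensionLE_zero _).1 hR) rs hreg
  rw [hrs, zero_add, smul_eq_mul, Ideal.mul_top] at hquot
  exact ModuleCat.hasProjectiveDimensionLE_of_linearEquiv (M := ModuleCat.of R (R ⧸ m))
    (N := ModuleCat.of R S) e.symm _

theorem RegularlyGeneratedMaximalIdeals.subsingleton_ext_of_isSimpleModule [IsNoetherianRing R]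
    (h : RegularlyGeneratedMaximalIdeals n R) (S : Type u) [AddCommGroup S] [Module R S]
    [IsSimpleModule R S] {i : ℕ} (hi : i < n) :
    Subsingleton (Abelian.Ext (ModuleCat.of R S) (ModuleCat.of R R) i) := by
  obtain ⟨m, hm, ⟨e⟩⟩ := isSimpleModule_iff_quot_maximal.1 ‹IsSimpleModule R S›
  obtain ⟨rs, rfl, hreg, hrs⟩ := h m hm
  have hm_smul : (m • ⊤ : Submodule R R) < ⊤ := by
    rw [smul_eq_mul, Ideal.mul_top]
    exact hm.ne_top.lt_top
  have : Module.Finite R S := Module.Finite.equiv e.symm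
  refine ModuleCat.subsingleton_ext_of_exists_isRegular m (ModuleCat.of R S) ?_
    (ModuleCat.of R R) hm_smul rs (fun r hr => hrs ▸ Ideal.subset_span hr)
    ⟨hreg, by rw [hrs]; exact hm_smul.ne'⟩ i hi
  change Module.support R S ⊆ _
  rw [e.support_eq, Module.support_eq_zeroLocus, Ideal.annihilator_quotient]

end Devissage

section ProjectiveResolutions

variable {C : Type u} [Category.{v} C] [Abelian C]

/-- The projective resolution of `X` given by a complex of projectives which is exact in positive
degrees, together with a cokernel `π` of its last differential. -/
noncomputable def projectiveResolutionOfExact {X : C} (P : ChainComplex C ℕ)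
    [∀ i, Projective (P.X i)] (hP : ∀ i, P.ExactAt (i + 1)) (π : P.X 0 ⟶ X)
    (hπ : Epi π) (w : P.d 1 0 ≫ π = 0) (hw : (ShortComplex.mk _ _ w).Exact) :
    ProjectiveResolution X where
  complex := P
  π := (ChainComplex.toSingle₀Equiv _ _).symm ⟨π, w⟩
  quasiIso := ⟨fun i => by
    cases i with
    | zero =>
      rw [ChainComplex.quasiIsoAt₀_iff,
        ShortComplex.quasiIso_iff_of_zeros' _ (P.shape 0 0 (by simp)) rfl rfl]
      have hf : ((ChainComplex.toSingle₀Equiv P X).symm ⟨π, w⟩).f 0 = π :=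
        ChainComplex.toSingle₀Equiv_symm_apply_f_zero π w
      refine (ShortComplex.exact_and_epi_g_iff_of_iso ?_).2 ⟨hw, hπ⟩
      exact ShortComplex.isoMk (Iso.refl _) (Iso.refl _) (Iso.refl _)
        ((Category.id_comp (P.d 1 0)).trans (Category.comp_id (P.d 1 0)).symm)
        ((Category.id_comp π).trans ((Category.comp_id _).trans hf).symm)
    | succ i =>
      rw [quasiIsoAt_iff_exactAt']
      · exact hP i
      · exact ChainComplex.exactAt_succ_single_obj _ _⟩

section Splice

variable {S : ShortComplex C} {P : ChainComplex C ℕ} {π : P.X 0 ⟶ S.X₁} (w : P.d 1 0 ≫ π = 0)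

/-- The complex `⋯ ⟶ P₁ ⟶ P₀ ⟶ S.X₂` obtained from a complex `P` augmented over `S.X₁`. -/
noncomputable def spliceComplex : ChainComplex C ℕ :=
  P.augment (π ≫ S.f) (by rw [reassoc_of% w, zero_comp])

theorem spliceComplex_exactAt_succ [Mono S.f] (hπ : (ShortComplex.mk _ _ w).Exact)
    (hP : ∀ i, P.ExactAt (i + 1)) (i : ℕ) : (spliceComplex w).ExactAt (i + 1) := by
  rw [HomologicalComplex.exactAt_iff' _ (i + 2) (i + 1) i (by simp) (by simp)]
  cases i with
  | zero =>
    let φ : ShortComplex.mk _ _ w ⟶ (spliceComplex w).sc' 2 1 0 :=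
      { τ₁ := 𝟙 (P.X 1)
        τ₂ := 𝟙 (P.X 0)
        τ₃ := S.f
        comm₁₂ := (Category.id_comp _).trans (Category.comp_id _).symm
        comm₂₃ := Category.id_comp _ }
    have : Epi φ.τ₁ := inferInstanceAs (Epi (𝟙 (P.X 1)))
    have : IsIso φ.τ₂ := inferInstanceAs (IsIso (𝟙 (P.X 0)))
    have : Mono φ.τ₃ := inferInstanceAs (Mono S.f)
    exact (ShortComplex.exact_iff_of_epi_of_isIso_of_mono φ).1 hπ
  | succ i =>
    exact (P.exactAt_iff' (i + 2) (i + 1) i (by simp) (by simp)).1 (hP i)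

theorem spliceComplex_d_comp : (spliceComplex w).d 1 0 ≫ S.g = 0 :=
  (Category.assoc π S.f S.g).trans ((congrArg (π ≫ ·) S.zero).trans comp_zero)

theorem spliceComplex_exact [Epi π] (hS : S.Exact) :
    (ShortComplex.mk _ _ (spliceComplex_d_comp w)).Exact := by
  let φ : ShortComplex.mk _ _ (spliceComplex_d_comp w) ⟶ S :=
    { τ₁ := π
      τ₂ := 𝟙 S.X₂
      τ₃ := 𝟙 S.X₃
      comm₁₂ := (Category.comp_id _).symm
      comm₂₃ := (Category.id_comp _).trans (Category.comp_id _).symm }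
  have : Epi φ.τ₁ := inferInstanceAs (Epi π)
  have : IsIso φ.τ₂ := inferInstanceAs (IsIso (𝟙 S.X₂))
  have : Mono φ.τ₃ := inferInstanceAs (Mono (𝟙 S.X₃))
  exact (ShortComplex.exact_iff_of_epi_of_isIso_of_mono φ).2 hS

end Splice

/-- The projective resolution of `S.X₃` obtained by splicing a resolution of `S.X₁` with the short
exact sequence `S`. -/
noncomputable def spliceResolution {S : ShortComplex C} (hS : S.ShortExact) [Projective S.X₂]
    (P : ProjectiveResolution S.X₁) : ProjectiveResolution S.X₃ :=
  let π : P.complex.X 0 ⟶ S.X₁ := P.π.f 0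
  have w : P.complex.d 1 0 ≫ π = 0 := P.complex_d_comp_π_f_zero
  have : Mono S.f := hS.mono_f
  have : Epi π := inferInstanceAs (Epi (P.π.f 0))
  have (i : ℕ) : Projective ((spliceComplex w).X i) := by
    cases i with
    | zero => assumption
    | succ i => exact P.projective i
  projectiveResolutionOfExact (spliceComplex w)
    (spliceComplex_exactAt_succ w P.exact₀ P.complex_exactAt_succ) S.g hS.epi_g
    (spliceComplex_d_comp w) (spliceComplex_exact w hS.exact)

end ProjectiveResolutions

theorem exists_projectiveResolution_of_hasProjectiveDimensionLE {R : Type u} [Ring R]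
    [IsNoetherianRing R] (n : ℕ) (M : ModuleCat.{u} R) [Module.Finite R M]
    (hM : HasProjectiveDimensionLE M n) :
    ∃ P : ProjectiveResolution M, (∀ i, Module.Finite R (P.complex.X i)) ∧
      ∀ i, n < i → IsZero (P.complex.X i) := by
  induction n generalizing M with
  | zero =>
    have := (projective_iff_hasProjectiveDimensionLE_zero _).2 hM
    have isZero_succ (i : ℕ) :
        IsZero (((ChainComplex.single₀ (ModuleCat.{u} R)).obj M).X (i + 1)) :=
      HomologicalComplex.isZero_single_obj_X (.down ℕ) 0 M (i + 1) (by simp)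
    refine ⟨.self M, ?_, ?_⟩
    · rintro (_ | i)
      · assumption
      · have := ModuleCat.subsingleton_of_isZero (isZero_succ i)
        exact inferInstanceAs (Module.Finite R (((ChainComplex.single₀ _).obj M).X (i + 1)))
    · rintro (_ | i) hi
      · omega
      · exact isZero_succ i
  | succ n ih =>
    obtain ⟨k, f, hf⟩ := Module.Finite.exists_fin' R M
    have hS := LinearMap.shortExact_shortComplexKer hf
    have : Projective f.shortComplexKer.X₂ :=
      (IsProjective.iff_projective (Fin k → R)).1 inferInstance
    obtain ⟨P, hfin, hzero⟩ := ih (ModuleCat.of R (LinearMap.ker f))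
      ((hS.hasProjectiveDimensionLT_X₃_iff n this).1 hM)
    refine ⟨spliceResolution hS P, ?_, ?_⟩
    · rintro (_ | i)
      · exact inferInstanceAs (Module.Finite R (Fin k → R))
      · exact hfin i
    · rintro (_ | i) hi
      · omega
      · exact hzero i (by omega)

section Restriction

variable {C ι ι' : Type*} [Category* C] [Preadditive C] [HasZeroObject C]
  {c : ComplexShape ι} {c' : ComplexShape ι'} (K : HomologicalComplex C c') (e : c.Embedding c')
  [e.IsRelIff] [K.IsStrictlySupported e]

/-- The canonical isomorphism from a complex supported on the image of `e` to its stupid truncation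
along `e`. -/
noncomputable def isoStupidTrunc : K ≅ K.stupidTrunc e :=
  have hasLift : e.HasLift (𝟙 (K.restriction e)) := fun _ hj i' hi' =>
    (K.isZero_X_of_isStrictlySupported e i' (fun _ hi => hj.2 _ (hi ▸ hi'))).eq_of_src _ _
  let φ : K ⟶ (K.restriction e).extend e := e.liftExtend _ hasLift
  have (i' : ι') : IsIso (φ.f i') := by
    by_cases hi' : ∃ i, e.f i = i'
    · obtain ⟨i, hi⟩ := hi'
      rw [e.liftExtend_f _ hasLift hi, HomologicalComplex.id_f]
      infer_instance
    · push Not at hi'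
      exact (K.isZero_X_of_isStrictlySupported e i' hi').isIso (K.isZero_stupidTrunc_X e i' hi') _
  @asIso _ _ _ _ φ (HomologicalComplex.Hom.isIso_of_components φ)

/-- Restricting a complex along `e` does not change its homology if the complex is supported on the
image of `e`; unlike in `HomologicalComplex.restrictionHomologyIso`, the neighbours of the degree
need not lie in that image. -/
noncomputable def homologyIsoRestriction [CategoryWithHomology C] (i : ι) :
    K.homology (e.f i) ≅ (K.restriction e).homology i :=
  (HomologicalComplex.homologyFunctor C c' (e.f i)).mapIso (isoStupidTrunc K e) ≪≫
    (K.restriction e).extendHomologyIso e rfl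

end Restriction

/-- The inclusion of the non-negative degrees into the integers, for homological grading. -/
def embeddingDownNatInt : (ComplexShape.down ℕ).Embedding (ComplexShape.down ℤ) :=
  ComplexShape.Embedding.mk' _ _ (fun i => i) Nat.cast_injective (by simp; lia)

instance : embeddingDownNatInt.IsRelIff := by unfold embeddingDownNatInt; infer_instance

section ExtOfComplex

variable {C : Type u} [Category.{v} C] [Abelian C] (P : ChainComplex C ℤ)

/-- A complex of projectives in non-negative degrees which is exact off degree `0`, regarded as a
projective resolution of its homology in degree `0`. -/
noncomputable def homologyZeroResolution [P.IsStrictlySupported embeddingDownNatInt]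
    [∀ i, Projective (P.X i)] (hP : ∀ i, i ≠ 0 → P.ExactAt i) :
    ProjectiveResolution (P.homology 0) :=
  let Q : ChainComplex C ℕ := P.restriction embeddingDownNatInt
  have hQ (i : ℕ) : Q.ExactAt (i + 1) := by
    rw [HomologicalComplex.exactAt_iff_isZero_homology]
    exact (hP (i + 1 : ℕ) (by lia)).isZero_homology.of_iso
      (homologyIsoRestriction P embeddingDownNatInt (i + 1)).symm
  have (i : ℕ) : Projective (Q.X i) := inferInstanceAs (Projective (P.X i))
  let ι : P.homology 0 ≅ Q.opcycles 0 :=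
    homologyIsoRestriction P embeddingDownNatInt 0 ≪≫ Q.isoHomologyι₀
  projectiveResolutionOfExact Q hQ (Q.pOpcycles 0 ≫ ι.inv) (epi_comp _ _)
    (by rw [Q.d_pOpcycles_assoc, zero_comp])
    (ShortComplex.exact_of_g_is_cokernel _
      ((Q.opcyclesIsCokernel 1 0 (by simp)).ofIsoColimit (Cofork.ext ι.symm)))

variable (R : Type*) [Ring R] [Linear R C] [EnoughProjectives C]

/-- `Ext` computed from a resolution given as a complex graded by the integers. -/
noncomputable def extHomologyZeroIso [P.IsStrictlySupported embeddingDownNatInt]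
    [∀ i, Projective (P.X i)] (hP : ∀ i, i ≠ 0 → P.ExactAt i) (Y : C) (k : ℕ) :
    ((Ext R C k).obj (.op (P.homology 0))).obj Y ≅ (P.linearYonedaObj R Y).homology k :=
  have : (P.linearYonedaObj R Y).IsStrictlySupported ComplexShape.embeddingUpNat := ⟨fun i hi =>
    ((linearYoneda R C).obj Y).map_isZero
      (P.isZero_X_of_isStrictlySupported embeddingDownNatInt i hi).op⟩
  let Q : ChainComplex C ℕ := P.restriction embeddingDownNatInt
  let ι : Q.linearYonedaObj R Y ≅
      (P.linearYonedaObj R Y).restriction ComplexShape.embeddingUpNat :=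
    HomologicalComplex.Hom.isoOfComponents (fun _ => Iso.refl _)
      (fun _ _ _ => (Category.id_comp _).trans (Category.comp_id _).symm)
  (homologyZeroResolution P hP).isoExt k Y ≪≫
    (HomologicalComplex.homologyFunctor _ _ k).mapIso ι ≪≫
    (homologyIsoRestriction (P.linearYonedaObj R Y) ComplexShape.embeddingUpNat k).symm

end ExtOfComplex

section ExtVanishing

variable {C : Type u} [Category.{v} C] [Abelian C] [HasExt.{w} C] {X Y : C}

theorem exactAt_linearYonedaObj_of_subsingleton_ext (R : Type*) [Ring R] [Linear R C]
    (P : ProjectiveResolution X) {i : ℕ} (h : Subsingleton (Abelian.Ext X Y i)) :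
    (P.complex.linearYonedaObj R Y).ExactAt i := by
  rw [HomologicalComplex.exactAt_iff' _ (i - 1) i (i + 1) (by cases i <;> simp) (by simp),
    ShortComplex.moduleCat_exact_iff]
  intro (f : P.complex.X i ⟶ Y) (hf : P.complex.d (i + 1) i ≫ f = 0)
  cases i with
  | zero =>
    let q : X ⟶ Y := P.exact₀.desc f hf
    have hq : q = 0 := Abelian.Ext.homEquiv₀.symm.injective (Subsingleton.elim _ _)
    have hqf : P.π.f 0 ≫ q = f := P.exact₀.g_desc f hf
    exact ⟨0, (map_zero _).trans (by rw [← hqf, hq]; exact comp_zero.symm)⟩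
  | succ i =>
    exact (P.extMk_eq_zero_iff f (i + 2) rfl hf i rfl).1 (Subsingleton.elim _ _)

theorem isZero_ext_of_subsingleton_ext (R : Type*) [Ring R] [Linear R C]
    [EnoughProjectives C] {i : ℕ} (h : Subsingleton (Abelian.Ext X Y i)) :
    IsZero (((Ext R C i).obj (.op X)).obj Y) :=
  (exactAt_linearYonedaObj_of_subsingleton_ext R (projectiveResolution X) h).isZero_homology.of_iso
    ((projectiveResolution X).isoExt i Y)

end ExtVanishing

/-- The reflection `i ↦ n - i`, which turns a cochain complex into a chain complex. -/
def embeddingReflection (n : ℤ) : (ComplexShape.down ℤ).Embedding (ComplexShape.up ℤ) :=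
  ComplexShape.Embedding.mk' _ _ (fun i => n - i) sub_right_injective (by simp; lia)

instance (n : ℤ) : (embeddingReflection n).IsRelIff := by
  unfold embeddingReflection; infer_instance

section DualComplex

variable {R : Type u} [CommRing R]

/-- The complex `Hom(P, R)`, regraded homologically so that the dual of `Pₙ₋ᵢ` sits in degree
`i`. -/
noncomputable def dualComplex (n : ℤ) (P : ChainComplex (ModuleCat.{u} R) ℤ) :
    ChainComplex (ModuleCat.{u} R) ℤ :=
  (P.linearYonedaObj R (ModuleCat.of R R)).restriction (embeddingReflection n)

theorem isZero_dualComplex_X {n i : ℤ} {P : ChainComplex (ModuleCat.{u} R) ℤ}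
    (h : IsZero (P.X (n - i))) : IsZero ((dualComplex n P).X i) :=
  ((linearYoneda R (ModuleCat.{u} R)).obj (ModuleCat.of R R)).map_isZero h.op

/-- The homology of the dual complex in degree `i` is the cohomology of `Hom(P, R)` in degree
`n - i`. -/
noncomputable def dualComplexHomologyIso (n i j : ℤ) (hij : n - i = j)
    (P : ChainComplex (ModuleCat.{u} R) ℤ) :
    (dualComplex n P).homology i ≅ (P.linearYonedaObj R (ModuleCat.of R R)).homology j :=
  HomologicalComplex.restrictionHomologyIso _ (embeddingReflection n) (i + 1) i (i - 1)
    (by simp) (by simp) (i' := j - 1) (j' := j) (k' := j + 1)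
    (by simp [embeddingReflection]; lia) hij (by simp [embeddingReflection]; lia)
    (by simp) (by simp)

/-- Morphisms `M ⟶ R` in the category of modules as linear forms. -/
def homEquivDual (M : ModuleCat.{u} R) : (M ⟶ ModuleCat.of R R) ≃ₗ[R] Module.Dual R M :=
  ModuleCat.homLinearEquiv

/-- Evaluation `x ↦ (φ ↦ φ x)`, with the dual of `M` taken to be the module of morphisms `M ⟶ R`. -/
noncomputable def doubleDualIso (M : ModuleCat.{u} R) [Module.Finite R M] [Module.Projective R M] :
    M ≅ ModuleCat.of R (ModuleCat.of R (M ⟶ ModuleCat.of R R) ⟶ ModuleCat.of R R) :=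
  (Module.evalEquiv R M ≪≫ₗ (homEquivDual M).dualMap ≪≫ₗ
    (homEquivDual (ModuleCat.of R (M ⟶ ModuleCat.of R R))).symm).toModuleIso

theorem doubleDualIso_hom_naturality {M N : ModuleCat.{u} R} [Module.Finite R M]
    [Module.Projective R M] [Module.Finite R N] [Module.Projective R N] (f : M ⟶ N) :
    f ≫ (doubleDualIso N).hom =
      (doubleDualIso M).hom ≫ ModuleCat.ofHom (Linear.leftComp R (ModuleCat.of R R)
        (ModuleCat.ofHom (Linear.leftComp R (ModuleCat.of R R) f))) := by
  ext x φ
  rfl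

/-- A complex of finite projective modules is isomorphic to its double dual: the two reflections
`i ↦ n - i` cancel, and each term is reflexive. -/
noncomputable def doubleDualComplexIso (n : ℤ) (P : ChainComplex (ModuleCat.{u} R) ℤ)
    [∀ i, Module.Finite R (P.X i)] [∀ i, Module.Projective R (P.X i)] :
    P ≅ dualComplex n (dualComplex n P) :=
  let ε (i : ℤ) : P.X (n - (n - i)) ≅ (dualComplex n (dualComplex n P)).X i := doubleDualIso _
  have hε (i j : ℤ) : P.d (n - (n - i)) (n - (n - j)) ≫ (ε j).hom =
      (ε i).hom ≫ (dualComplex n (dualComplex n P)).d i j := doubleDualIso_hom_naturality _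
  HomologicalComplex.Hom.isoOfComponents
    (fun i => P.XIsoOfEq (sub_sub_self n i).symm ≪≫ ε i)
    (fun i j _ => by
      rw [Iso.trans_hom, Iso.trans_hom, Category.assoc, ← hε,
        HomologicalComplex.XIsoOfEq_hom_comp_d_assoc,
        HomologicalComplex.d_comp_XIsoOfEq_hom_assoc])

end DualComplex

section Duality

variable {R : Type u} [CommRing R] {n : ℕ} {P : ChainComplex (ModuleCat.{u} R) ℤ}

/-- `P` is a resolution of `P.homology 0` of length at most `n` by finite projective modules. The
grading is by `ℤ`, with zeros on both sides, so that no subtraction truncates under dualization. -/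
structure IsFiniteProjectiveResolution (n : ℕ) (P : ChainComplex (ModuleCat.{u} R) ℤ) : Prop where
  finite (i : ℤ) : Module.Finite R (P.X i)
  projective (i : ℤ) : Module.Projective R (P.X i)
  isZero_of_neg (i : ℤ) (hi : i < 0) : IsZero (P.X i)
  isZero_of_lt (i : ℤ) (hi : n < i) : IsZero (P.X i)
  exactAt (i : ℤ) (hi : i ≠ 0) : P.ExactAt i

theorem exists_isFiniteProjectiveResolution [IsNoetherianRing R] (M : ModuleCat.{u} R)
    [Module.Finite R M] (hM : HasProjectiveDimensionLE M n) :
    ∃ P : ChainComplex (ModuleCat.{u} R) ℤ, IsFiniteProjectiveResolution n P ∧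
      Nonempty (P.homology 0 ≅ M) := by
  obtain ⟨Q, hfin, hzero⟩ := exists_projectiveResolution_of_hasProjectiveDimensionLE n M hM
  let P := Q.complex.extend embeddingDownNatInt
  have X_iso (i : ℕ) : P.X i ≅ Q.complex.X i := Q.complex.extendXIso embeddingDownNatInt rfl
  have isZero_of_neg (i : ℤ) (hi : i < 0) : IsZero (P.X i) :=
    Q.complex.isZero_extend_X embeddingDownNatInt i fun (k : ℕ) (hk : (k : ℤ) = i) => by lia
  have subsingleton_of_neg (i : ℤ) (hi : i < 0) : Subsingleton (P.X i) :=
    ModuleCat.subsingleton_of_isZero (isZero_of_neg i hi)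
  refine ⟨P, ⟨fun i => ?_, fun i => ?_, isZero_of_neg, fun i hi => ?_, fun i hi => ?_⟩, ⟨?_⟩⟩
  · obtain hi | hi := lt_or_ge i 0
    · have := subsingleton_of_neg i hi
      infer_instance
    · lift i to ℕ using hi
      have := hfin i
      exact Module.Finite.equiv (X_iso i).symm.toLinearEquiv
  · obtain hi | hi := lt_or_ge i 0
    · have := subsingleton_of_neg i hi
      infer_instance
    · lift i to ℕ using hi
      have := (IsProjective.iff_projective (Q.complex.X i)).2 (Q.projective i)
      exact Module.Projective.of_equiv (X_iso i).symm.toLinearEquiv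
  · lift i to ℕ using by lia
    exact (hzero i (by lia)).of_iso (X_iso i)
  · obtain hi | hi := hi.lt_or_gt
    · exact ShortComplex.exact_of_isZero_X₂ _ (isZero_of_neg i hi)
    · obtain ⟨k, rfl⟩ : ∃ k : ℕ, i = (k + 1 : ℕ) := ⟨(i - 1).toNat, by lia⟩
      exact (Q.complex.extend_exactAt_iff embeddingDownNatInt rfl).2 (Q.complex_exactAt_succ k)
  · exact Q.complex.extendHomologyIso embeddingDownNatInt (j := 0) rfl ≪≫
      isoOfQuasiIsoAt Q.π 0 ≪≫ HomologicalComplex.singleObjHomologySelfIso (.down ℕ) 0 M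

namespace IsFiniteProjectiveResolution

/-- `Ext(H₀(P), R)` is the cohomology of `Hom(P, R)`. -/
noncomputable def extIso (h : IsFiniteProjectiveResolution n P) (k : ℕ) :
    ((Ext R (ModuleCat.{u} R) k).obj (.op (P.homology 0))).obj (ModuleCat.of R R) ≅
      (P.linearYonedaObj R (ModuleCat.of R R)).homology k :=
  have (i : ℤ) : Projective (P.X i) := (IsProjective.iff_projective (P.X i)).1 (h.projective i)
  have : P.IsStrictlySupported embeddingDownNatInt :=
    ⟨fun i hi => h.isZero_of_neg i (by by_contra! hi'; exact hi i.toNat (Int.toNat_of_nonneg hi'))⟩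
  extHomologyZeroIso P R h.exactAt _ k

/-- `Extⁿ(H₀(P), R)` is the module resolved by the dual complex. -/
noncomputable def extIsoHomologyDualComplex (h : IsFiniteProjectiveResolution n P) :
    ((Ext R (ModuleCat.{u} R) n).obj (.op (P.homology 0))).obj (ModuleCat.of R R) ≅
      (dualComplex n P).homology 0 :=
  h.extIso n ≪≫ (dualComplexHomologyIso n 0 n (sub_zero _) P).symm

theorem dualComplex (h : IsFiniteProjectiveResolution n P)
    (hExt : ∀ i < n, IsZero
      (((Ext R (ModuleCat.{u} R) i).obj (.op (P.homology 0))).obj (ModuleCat.of R R))) :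
    IsFiniteProjectiveResolution n (dualComplex n P) where
  finite i := have := h.finite (n - i); have := h.projective (n - i)
    Module.Finite.equiv (homEquivDual (P.X (n - i))).symm
  projective i := have := h.finite (n - i); have := h.projective (n - i)
    Module.Projective.of_equiv (homEquivDual (P.X (n - i))).symm
  isZero_of_neg i hi := isZero_dualComplex_X (h.isZero_of_lt _ (by lia))
  isZero_of_lt i hi := isZero_dualComplex_X (h.isZero_of_neg _ (by lia))
  exactAt i hi := by
    rcases lt_or_ge (n : ℤ) i with hn | hn
    · exact ShortComplex.exact_of_isZero_X₂ _ (isZero_dualComplex_X (h.isZero_of_neg _ (by lia)))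
    · rcases hi.lt_or_gt with hi | hi
      · exact ShortComplex.exact_of_isZero_X₂ _ (isZero_dualComplex_X (h.isZero_of_lt _ (by lia)))
      · obtain ⟨k, hk⟩ : ∃ k : ℕ, n - i = k := ⟨(n - i).toNat, by lia⟩
        rw [HomologicalComplex.exactAt_iff_isZero_homology]
        exact (hExt k (by lia)).of_iso (dualComplexHomologyIso n i k hk P ≪≫ (h.extIso k).symm)

end IsFiniteProjectiveResolution

theorem nonempty_ext_ext_iso [IsNoetherianRing R] (M : ModuleCat.{u} R) [Module.Finite R M]
    (hM : HasProjectiveDimensionLE M n)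
    (hExt : ∀ i < n, IsZero (((Ext R (ModuleCat.{u} R) i).obj (.op M)).obj (ModuleCat.of R R))) :
    Nonempty (((Ext R (ModuleCat.{u} R) n).obj
      (.op (((Ext R (ModuleCat.{u} R) n).obj (.op M)).obj (ModuleCat.of R R)))).obj
        (ModuleCat.of R R) ≅ M) := by
  obtain ⟨P, hP, ⟨e⟩⟩ := exists_isFiniteProjectiveResolution M hM
  let mapExt {X Y : ModuleCat.{u} R} (f : X ≅ Y) (i : ℕ) :
      ((Ext R _ i).obj (.op X)).obj (ModuleCat.of R R) ≅
        ((Ext R _ i).obj (.op Y)).obj (ModuleCat.of R R) :=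
    ((Ext R (ModuleCat.{u} R) i).mapIso f.symm.op).app (ModuleCat.of R R)
  have hD := hP.dualComplex fun i hi => (hExt i hi).of_iso (mapExt e i)
  have := hP.finite
  have := hP.projective
  exact ⟨mapExt (mapExt e.symm n ≪≫ hP.extIsoHomologyDualComplex) n ≪≫
    hD.extIsoHomologyDualComplex ≪≫
    (HomologicalComplex.homologyFunctor _ _ 0).mapIso (doubleDualComplexIso n P).symm ≪≫ e⟩

theorem ext_ext_duality_general [IsNoetherianRing R] (hR : RegularlyGeneratedMaximalIdeals n R)
    (M : Type u) [AddCommGroup M] [Module R M] (hM : IsFiniteLength R M) :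
    Nonempty (((Ext R (ModuleCat.{u} R) n).obj (.op (((Ext R (ModuleCat.{u} R) n).obj
      (.op (ModuleCat.of R M))).obj (ModuleCat.of R R)))).obj (ModuleCat.of R R) ≃ₗ[R] M) := by
  have : IsNoetherian R M := (isFiniteLength_iff_isNoetherian_isArtinian.1 hM).1
  have hpd : HasProjectiveDimensionLE (ModuleCat.of R M) n :=
    hasProjectiveDimensionLE_of_isFiniteLength
      (fun S => hR.hasProjectiveDimensionLE_of_isSimpleModule S) hM
  have hExt (i : ℕ) (hi : i < n) :
      Subsingleton (Abelian.Ext (ModuleCat.of R M) (ModuleCat.of R R) i) :=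
    subsingleton_ext_of_isFiniteLength
      (fun S => hR.subsingleton_ext_of_isSimpleModule S hi) hM
  obtain ⟨e⟩ := nonempty_ext_ext_iso (ModuleCat.of R M) hpd
    fun i hi => isZero_ext_of_subsingleton_ext R (hExt i hi)
  exact ⟨e.toLinearEquiv⟩

end Duality

/-- double Ext duality for finite length modules over a polynomial ring. -/
theorem ext_ext_duality {K : Type} [Field K] (n : ℕ)
    (M : Type) [AddCommGroup M] [Module (MvPolynomial (Fin n) K) M]
    [Module.Finite (MvPolynomial (Fin n) K) M]
    (hM : IsFiniteLength (MvPolynomial (Fin n) K) M) :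
    Nonempty
      ((((Ext (MvPolynomial (Fin n) K) (ModuleCat (MvPolynomial (Fin n) K)) n).obj
          (Opposite.op (ModuleCat.of (MvPolynomial (Fin n) K)
            (((Ext (MvPolynomial (Fin n) K) (ModuleCat (MvPolynomial (Fin n) K)) n).obj
                (Opposite.op (ModuleCat.of (MvPolynomial (Fin n) K) M))).obj
              (ModuleCat.of (MvPolynomial (Fin n) K) (MvPolynomial (Fin n) K)))))).obj
        (ModuleCat.of (MvPolynomial (Fin n) K) (MvPolynomial (Fin n) K))) ≃ₗ[MvPolynomial (Fin n) K] M) :=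
  ext_ext_duality_general (regularlyGeneratedMaximalIdeals_mvPolynomial K n) M hM
end

section
/- Let R = Q[x_1,x_2,x_3,x_4] and let I be the ideal generated by x_4^2, x_3 x_4, x_3^3, x_2 x_3^2 − x_2^2 x_4, x_1 x_3^2 − x_1 x_2 x_4 + x_2^2 x_4, x_2^2 x_3, x_2^3, x_1^3 x_4 − x_1^2 x_2 x_4 + x_1 x_2^2 x_4, x_1^3 x_3, x_1^3 x_2 − x_1^2 x_2^2, x_1^4. Then A = R/I is a standard graded Artinian algebra that has the Weak Lefschetz Property: there exists a linear form l ∈ A_1 such that the multiplication map ·l : A_i → A_{i+1} has full rank for every i ≥ 0. -/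
/-!
The linear form `x₁` is a Lefschetz element: it is injective on `A₀`, `A₁` and surjective onto
`A₃, A₄, …`.

Since `A` is generated in degree one, surjectivity `A₃ = x₁A₂` propagates to all higher degrees,
and with `x₁⁴ = 0` it also makes `A` vanish from degree 6 on. For `A₃ = x₁A₂`, the only cubic
monomials in `x₂, x₃, x₄` that survive in `A` are `x₂²x₄ = x₂x₃² = x₁(x₂x₄ - x₃²)`.

For injectivity, give `x₁` weight 2 and the other variables weight 3. All terms of the generators
have weight at least 6, hence so do all terms of elements of `I`, whereas the terms of `x₁p` with
`deg p ≤ 1` have weight at most 5.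
-/

open MvPolynomial

/-- The degree-`d` graded piece of the quotient `R ⧸ I`. -/
noncomputable def quotPiece {K : Type} [Field K] {σ : Type}
    (I : Ideal (MvPolynomial σ K)) (d : ℕ) : Submodule K (MvPolynomial σ K ⧸ I) :=
  (MvPolynomial.homogeneousSubmodule σ K d).map (Ideal.Quotient.mkₐ K I).toLinearMap

/-- The Weak Lefschetz Property for the standard graded algebra `R ⧸ I`. -/
def HasWLP {K : Type} [Field K] {σ : Type} (I : Ideal (MvPolynomial σ K)) : Prop :=
  ∃ l ∈ homogeneousSubmodule σ K 1, ∀ i : ℕ,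
    (∀ x ∈ quotPiece I i, Ideal.Quotient.mk I l * x = 0 → x = 0) ∨
    (∀ y ∈ quotPiece I (i + 1), ∃ x ∈ quotPiece I i, Ideal.Quotient.mk I l * x = y)

section PowersOfSubmodule

variable {K A : Type*} [CommSemiring K] [Semiring A] [Algebra K A] {V : Submodule K A}
  {u : A} {i j n : ℕ}

lemma pow_succ_le_span_singleton_mul_pow
    (h : V ^ (i + 1) ≤ Submodule.span K {u} * V ^ i) (hij : i ≤ j) :
    V ^ (j + 1) ≤ Submodule.span K {u} * V ^ j := by
  induction j, hij using Nat.le_induction with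
  | base => exact h
  | succ j _ ih =>
    calc V ^ (j + 1 + 1) = V ^ (j + 1) * V := pow_succ V (j + 1)
      _ ≤ Submodule.span K {u} * V ^ j * V := by gcongr
      _ = Submodule.span K {u} * V ^ (j + 1) := by rw [mul_assoc, ← pow_succ]

lemma pow_add_le_span_singleton_pow_mul_pow
    (h : V ^ (i + 1) ≤ Submodule.span K {u} * V ^ i) (n : ℕ) :
    V ^ (i + n) ≤ Submodule.span K {u} ^ n * V ^ i := by
  induction n with
  | zero => rw [add_zero, pow_zero, one_mul]
  | succ n ih =>
    calc V ^ (i + n + 1)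
        ≤ Submodule.span K {u} * V ^ (i + n) :=
          pow_succ_le_span_singleton_mul_pow h (Nat.le_add_right i n)
      _ ≤ Submodule.span K {u} * (Submodule.span K {u} ^ n * V ^ i) := by gcongr
      _ = Submodule.span K {u} ^ (n + 1) * V ^ i := by rw [← mul_assoc, pow_succ']

lemma pow_eq_bot_of_pow_eq_zero
    (h : V ^ (i + 1) ≤ Submodule.span K {u} * V ^ i) (hu : u ^ n = 0) (hj : i + n ≤ j) :
    V ^ j = ⊥ := by
  have hpow : V ^ (i + n) ≤ ⊥ := by
    simpa only [Submodule.span_pow, Set.singleton_pow, hu, Submodule.span_zero_singleton,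
      Submodule.bot_mul] using pow_add_le_span_singleton_pow_mul_pow h n
  rw [← Nat.add_sub_cancel' hj, pow_add, le_bot_iff.1 hpow, Submodule.bot_mul]

lemma span_range_pow_three_le_iff {ι : Type*} {x : ι → A} {W : Submodule K A} :
    Submodule.span K (Set.range x) ^ 3 ≤ W ↔ ∀ a b c, x a * x b * x c ∈ W := by
  rw [pow_three', Submodule.span_mul_span, Submodule.span_mul_span, Submodule.span_le]
  simp only [← Set.image2_mul, Set.image2_subset_iff, Set.forall_mem_image2,
    Set.forall_mem_range, SetLike.mem_coe]

end PowersOfSubmodule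

section GradedPieces

variable {K : Type} [Field K] {σ : Type} {I : Ideal (MvPolynomial σ K)} {i j n : ℕ}

lemma quotPiece_eq_span_range_pow (I : Ideal (MvPolynomial σ K)) (n : ℕ) :
    quotPiece I n =
      Submodule.span K (Set.range fun a => Ideal.Quotient.mk I (X a)) ^ n := by
  rw [quotPiece, ← homogeneousSubmodule_one_pow, homogeneousSubmodule_one_eq_span_X,
    Submodule.map_pow, Submodule.map_span, ← Set.range_comp]
  rfl

lemma exists_mem_quotPiece_mul_eq {u y : MvPolynomial σ K ⧸ I}
    (h : quotPiece I (i + 1) ≤ Submodule.span K {u} * quotPiece I i) (hij : i ≤ j)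
    (hy : y ∈ quotPiece I (j + 1)) : ∃ x ∈ quotPiece I j, u * x = y := by
  simp only [quotPiece_eq_span_range_pow] at h hy ⊢
  exact Submodule.mem_span_singleton_mul.1 (pow_succ_le_span_singleton_mul_pow h hij hy)

lemma quotPiece_eq_bot_of_pow_eq_zero {u : MvPolynomial σ K ⧸ I}
    (h : quotPiece I (i + 1) ≤ Submodule.span K {u} * quotPiece I i) (hu : u ^ n = 0)
    (hj : i + n ≤ j) : quotPiece I j = ⊥ := by
  simp only [quotPiece_eq_span_range_pow] at h ⊢
  exact pow_eq_bot_of_pow_eq_zero h hu hj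

lemma eq_zero_of_mk_X_mul_eq_zero {s : Set (σ →₀ ℕ)} {hs : IsUpperSet s}
    (hI : I ≤ restrictSupportIdeal K s hs) {a : σ}
    (ha : ∀ m : σ →₀ ℕ, m.degree = i → Finsupp.single a 1 + m ∉ s)
    {x : MvPolynomial σ K ⧸ I} (hx : x ∈ quotPiece I i)
    (hax : Ideal.Quotient.mk I (X a) * x = 0) : x = 0 := by
  obtain ⟨p, hp, rfl⟩ := hx
  have hmem : X a * p ∈ restrictSupport K s :=
    hI (Ideal.Quotient.eq_zero_iff_mem.1 ((map_mul _ _ _).trans hax))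
  suffices p = 0 by rw [this, map_zero]
  ext m
  by_contra hm
  have hdeg : m.degree = i := by
    rw [Finsupp.degree_eq_weight_one]
    exact hp hm
  refine ha m hdeg ((mem_restrictSupport_iff K).1 hmem ?_)
  rwa [Finset.mem_coe, mem_support_iff, coeff_X_mul]

end GradedPieces

section Weight

variable {σ : Type*} {w : σ → ℕ}

lemma weight_mono (w : σ → ℕ) : Monotone (Finsupp.weight (R := ℕ) w) := by
  intro m n hmn
  rw [← add_tsub_cancel_of_le hmn, map_add]
  exact Nat.le_add_right _ _

lemma isUpperSet_le_weight (w : σ → ℕ) (d : ℕ) :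
    IsUpperSet {m : σ →₀ ℕ | d ≤ Finsupp.weight w m} :=
  (isUpperSet_Ici d).preimage (weight_mono w)

lemma weight_le_mul_degree {c : ℕ} (hw : ∀ a, w a ≤ c) (m : σ →₀ ℕ) :
    Finsupp.weight w m ≤ m.degree * c := by
  rw [Finsupp.weight_apply, Finsupp.degree_apply, Finset.sum_mul]
  exact Finset.sum_le_sum fun a _ => Nat.mul_le_mul_left _ (hw a)

end Weight

section AbdallahIdeal

/-- The generators of the ideal of the theorem, over an arbitrary coefficient ring. -/
noncomputable def abdallahGenerators (K : Type*) [CommRing K] : Set (MvPolynomial (Fin 4) K) :=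
  {X 3 ^ 2, X 2 * X 3, X 2 ^ 3,
    X 1 * X 2 ^ 2 - X 1 ^ 2 * X 3,
    X 0 * X 2 ^ 2 - X 0 * X 1 * X 3 + X 1 ^ 2 * X 3,
    X 1 ^ 2 * X 2, X 1 ^ 3,
    X 0 ^ 3 * X 3 - X 0 ^ 2 * X 1 * X 3 + X 0 * X 1 ^ 2 * X 3,
    X 0 ^ 3 * X 2, X 0 ^ 3 * X 1 - X 0 ^ 2 * X 1 ^ 2, X 0 ^ 4}

/-- The ideal of the theorem, over an arbitrary coefficient ring. -/
noncomputable def abdallahIdeal (K : Type*) [CommRing K] : Ideal (MvPolynomial (Fin 4) K) :=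
  Ideal.span (abdallahGenerators K)

/-- Weights of the variables for which every term of every generator has weight at least `6`,
while `x₁` times a form of degree at most `1` has terms of weight at most `5`. -/
def abdallahWeight : Fin 4 → ℕ := ![2, 3, 3, 3]

lemma mk_abdallahIdeal_eq_zero {K : Type*} [CommRing K] {g : MvPolynomial (Fin 4) K}
    (hg : g ∈ abdallahGenerators K) : Ideal.Quotient.mk (abdallahIdeal K) g = 0 :=
  Ideal.Quotient.eq_zero_iff_mem.2 (Ideal.subset_span hg)

lemma cubic_eq_zero_or_eq_mul_quadric {A : Type*} [CommRing A] {x : Fin 4 → A}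
    (h33 : x 3 ^ 2 = 0) (h23 : x 2 * x 3 = 0) (h222 : x 2 ^ 3 = 0)
    (h122 : x 1 * x 2 ^ 2 - x 1 ^ 2 * x 3 = 0)
    (h022 : x 0 * x 2 ^ 2 - x 0 * x 1 * x 3 + x 1 ^ 2 * x 3 = 0)
    (h112 : x 1 ^ 2 * x 2 = 0) (h111 : x 1 ^ 3 = 0)
    {a b c : Fin 4} (ha : a ≠ 0) (hb : b ≠ 0) (hc : c ≠ 0) :
    x a * x b * x c = 0 ∨ x a * x b * x c = x 0 * (x 1 * x 3 - x 2 * x 2) := by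
  have h113 : x 1 ^ 2 * x 3 = x 0 * (x 1 * x 3 - x 2 * x 2) := by linear_combination h022
  rw [h113, sub_eq_zero] at h122
  fin_cases a <;> fin_cases b <;> fin_cases c <;>
    simp only [Fin.zero_eta, Fin.mk_one, Fin.reduceFinMk, ne_eq, not_true] at ha hb hc ⊢ <;> grind

lemma mk_cubic_eq_zero_or_eq_mk_X_zero_mul (K : Type*) [CommRing K] {a b c : Fin 4}
    (ha : a ≠ 0) (hb : b ≠ 0) (hc : c ≠ 0) :
    Ideal.Quotient.mk (abdallahIdeal K) (X a * X b * X c) = 0 ∨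
      Ideal.Quotient.mk (abdallahIdeal K) (X a * X b * X c) =
        Ideal.Quotient.mk (abdallahIdeal K) (X 0 * (X 1 * X 3 - X 2 * X 2)) := by
  have hrel : ∀ g ∈ abdallahGenerators K, Ideal.Quotient.mk (abdallahIdeal K) g = 0 :=
    fun _ => mk_abdallahIdeal_eq_zero
  simp only [abdallahGenerators, Set.forall_mem_insert, Set.mem_singleton_iff, forall_eq,
    map_add, map_sub, map_mul, map_pow] at hrel
  obtain ⟨h33, h23, h222, h122, h022, h112, h111, -⟩ := hrel
  simp only [map_sub, map_mul]
  exact cubic_eq_zero_or_eq_mul_quadric (x := fun a => Ideal.Quotient.mk (abdallahIdeal K) (X a))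
    h33 h23 h222 h122 h022 h112 h111 ha hb hc

lemma quotPiece_abdallahIdeal_three_le (K : Type) [Field K] :
    quotPiece (abdallahIdeal K) 3 ≤
      Submodule.span K {Ideal.Quotient.mk (abdallahIdeal K) (X 0)} *
        quotPiece (abdallahIdeal K) 2 := by
  rw [quotPiece_eq_span_range_pow, span_range_pow_three_le_iff]
  have hquad {p : MvPolynomial (Fin 4) K} (hp : p.IsHomogeneous 2) :
      Ideal.Quotient.mk (abdallahIdeal K) (X 0 * p) ∈
        Submodule.span K {Ideal.Quotient.mk (abdallahIdeal K) (X 0)} *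
          quotPiece (abdallahIdeal K) 2 :=
    Submodule.mem_span_singleton_mul.2 ⟨_, ⟨p, hp, rfl⟩, (map_mul _ _ _).symm⟩
  have hX (i j : Fin 4) : (X i * X j : MvPolynomial (Fin 4) K).IsHomogeneous 2 :=
    (isHomogeneous_X K i).mul (isHomogeneous_X K j)
  intro a b c
  rw [← map_mul, ← map_mul]
  by_cases ha : a = 0
  · simpa only [ha, mul_assoc] using hquad (hX b c)
  by_cases hb : b = 0
  · simpa only [hb, mul_left_comm, mul_assoc] using hquad (hX a c)
  by_cases hc : c = 0
  · simpa only [hc, mul_comm] using hquad (hX a b)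
  obtain h | h := mk_cubic_eq_zero_or_eq_mk_X_zero_mul K ha hb hc
  · exact h ▸ zero_mem _
  · exact h ▸ hquad ((hX 1 3).sub (hX 2 2))

lemma abdallahIdeal_le_restrictSupportIdeal (K : Type*) [CommRing K] :
    abdallahIdeal K ≤ restrictSupportIdeal K _ (isUpperSet_le_weight abdallahWeight 6) := by
  set J := restrictSupportIdeal K _ (isUpperSet_le_weight abdallahWeight 6)
  have hmon {m : Fin 4 →₀ ℕ} (hm : 6 ≤ Finsupp.weight abdallahWeight m) :
      (monomial m 1 : MvPolynomial (Fin 4) K) ∈ J :=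
    (monomial_mem_restrictSupport K).2 (Or.inl hm)
  refine Ideal.span_le.2 (show ∀ g ∈ abdallahGenerators K, g ∈ J from ?_)
  simp only [abdallahGenerators, Set.forall_mem_insert, Set.mem_singleton_iff, forall_eq,
    X, monomial_pow, monomial_mul, one_mul, one_pow]
  refine ⟨hmon ?_, hmon ?_, hmon ?_, J.sub_mem (hmon ?_) (hmon ?_),
    J.add_mem (J.sub_mem (hmon ?_) (hmon ?_)) (hmon ?_), hmon ?_, hmon ?_,
    J.add_mem (J.sub_mem (hmon ?_) (hmon ?_)) (hmon ?_),
    hmon ?_, J.sub_mem (hmon ?_) (hmon ?_), hmon ?_⟩ <;>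
    simp [Finsupp.weight_single, abdallahWeight]

lemma eq_zero_of_mk_X_zero_mul_eq_zero {K : Type} [Field K] {i : ℕ} (hi : i < 2)
    {x : MvPolynomial (Fin 4) K ⧸ abdallahIdeal K} (hx : x ∈ quotPiece (abdallahIdeal K) i)
    (h : Ideal.Quotient.mk (abdallahIdeal K) (X 0) * x = 0) : x = 0 := by
  refine eq_zero_of_mk_X_mul_eq_zero (abdallahIdeal_le_restrictSupportIdeal K) ?_ hx h
  intro m hm
  have hX : Finsupp.weight abdallahWeight (Finsupp.single 0 1) = 2 := by
    simp [Finsupp.weight_single, abdallahWeight]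
  have hweight : Finsupp.weight abdallahWeight m ≤ m.degree * 3 :=
    weight_le_mul_degree (by decide) m
  rw [Set.mem_ofPred_eq, map_add, hX]
  omega

end AbdallahIdeal

theorem abdallah_first_ideal_has_WLP_general (K : Type) [Field K] :
    (∃ N : ℕ, ∀ i ≥ N, quotPiece (abdallahIdeal K) i = ⊥) ∧ HasWLP (abdallahIdeal K) := by
  have hsurj := quotPiece_abdallahIdeal_three_le K
  have hX : Ideal.Quotient.mk (abdallahIdeal K) (X 0) ^ 4 = 0 :=
    mk_abdallahIdeal_eq_zero (by simp [abdallahGenerators])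
  refine ⟨⟨2 + 4, fun i hi => quotPiece_eq_bot_of_pow_eq_zero hsurj hX hi⟩,
    X 0, isHomogeneous_X K 0, fun i => ?_⟩
  obtain hi | hi := lt_or_ge i 2
  · exact Or.inl fun x => eq_zero_of_mk_X_zero_mul_eq_zero hi
  · exact Or.inr fun y => exists_mem_quotPiece_mul_eq hsurj hi

/-- the first ideal of Abdallah et al. is Artinian and has WLP.
Here `X 0, X 1, X 2, X 3` stand for `x_1, x_2, x_3, x_4`. -/
theorem abdallah_first_ideal_has_WLP :
    (∃ N : ℕ, ∀ i ≥ N, quotPiece (Ideal.span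
      ({X 3 ^ 2, X 2 * X 3, X 2 ^ 3,
        X 1 * X 2 ^ 2 - X 1 ^ 2 * X 3,
        X 0 * X 2 ^ 2 - X 0 * X 1 * X 3 + X 1 ^ 2 * X 3,
        X 1 ^ 2 * X 2, X 1 ^ 3,
        X 0 ^ 3 * X 3 - X 0 ^ 2 * X 1 * X 3 + X 0 * X 1 ^ 2 * X 3,
        X 0 ^ 3 * X 2, X 0 ^ 3 * X 1 - X 0 ^ 2 * X 1 ^ 2, X 0 ^ 4} :
        Set (MvPolynomial (Fin 4) ℚ))) i = ⊥) ∧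
    HasWLP (Ideal.span
      ({X 3 ^ 2, X 2 * X 3, X 2 ^ 3,
        X 1 * X 2 ^ 2 - X 1 ^ 2 * X 3,
        X 0 * X 2 ^ 2 - X 0 * X 1 * X 3 + X 1 ^ 2 * X 3,
        X 1 ^ 2 * X 2, X 1 ^ 3,
        X 0 ^ 3 * X 3 - X 0 ^ 2 * X 1 * X 3 + X 0 * X 1 ^ 2 * X 3,
        X 0 ^ 3 * X 2, X 0 ^ 3 * X 1 - X 0 ^ 2 * X 1 ^ 2, X 0 ^ 4} :
        Set (MvPolynomial (Fin 4) ℚ))) :=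
  abdallah_first_ideal_has_WLP_general ℚ
end

section
/- Let K be a field of characteristic 0 and let I ⊆ K[x,y] be a homogeneous ideal such that A = K[x,y]/I is Artinian. Then A has the Weak Lefschetz Property: there exists a linear form l ∈ A_1 such that the multiplication map ·l : A_i → A_{i+1} has full rank for every i ≥ 0. -/
/-!
The linear form `ℓ = a y - b x` vanishes at the point `p = (a, b)`, and a binary form is divisible
by `ℓ` as soon as it vanishes at `p ≠ 0`. Let `f` be a nonzero form of least degree `d` in `I` (if
there is none, multiplication by any `ℓ ≠ 0` is injective in every degree), and choose `p` off the
curve `x f = 0`, which is possible over any infinite field. Below degree `d` the ideal contains no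
nonzero forms, so multiplication by `ℓ` into these degrees is injective. Into degrees `d` and above
it is surjective: since `f p ≠ 0`, every form agrees at `p` with a multiple of `f`, hence is
congruent modulo `I` to a form divisible by `ℓ`.
-/

open MvPolynomial

/-- `I` is a homogeneous ideal: all homogeneous components of its members lie in `I`. -/
def IsHomogeneousIdeal {K : Type} [Field K] {σ : Type} (I : Ideal (MvPolynomial σ K)) : Prop :=
  ∀ g ∈ I, ∀ i : ℕ, homogeneousComponent i g ∈ I

section HomogeneousEvaluation

variable {σ R A K : Type*}

lemma aeval_mul_left_of_isHomogeneous [CommSemiring R] [CommSemiring A] [Algebra R A]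
    {g : MvPolynomial σ R} {n : ℕ} (hg : g.IsHomogeneous n) (t : A) (x : σ → A) :
    aeval (fun j => t * x j) g = t ^ n * aeval x g := by
  simp only [aeval_def, eval₂_eq, Finset.mul_sum]
  refine Finset.sum_congr rfl fun d hd => ?_
  have hdeg : ∑ j ∈ d.support, d j = n := (hg.degree_eq_sum_deg_support hd).symm
  rw [← hdeg, ← Finset.prod_pow_eq_pow_sum]
  simp only [mul_pow, Finset.prod_mul_distrib]
  ring

lemma aeval_sub_aeval_mem [CommSemiring R] [CommRing A] [Algebra R A] {J : Ideal A}
    {x y : σ → A} (h : ∀ j, x j - y j ∈ J) (g : MvPolynomial σ R) :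
    aeval x g - aeval y g ∈ J := by
  have hxy : (Ideal.Quotient.mkₐ R J).comp (aeval x) = (Ideal.Quotient.mkₐ R J).comp (aeval y) := by
    ext j
    simpa using Ideal.Quotient.eq.mpr (h j)
  exact Ideal.Quotient.eq.mp (DFunLike.congr_fun hxy g)

/-- Modulo `J` the generic point `X` and the point `p` are proportional, so homogeneity relates the
values `g` and `eval p g` of `g` at these two points. -/
lemma C_pow_mul_sub_C_eval_mul_X_pow_mem [CommRing R] {g : MvPolynomial σ R} {n : ℕ}
    (hg : g.IsHomogeneous n) {p : σ → R} {i : σ} {J : Ideal (MvPolynomial σ R)}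
    (hJ : ∀ j, C (p i) * X j - X i * C (p j) ∈ J) :
    C (p i) ^ n * g - C (eval p g) * X i ^ n ∈ J := by
  have hX : aeval (fun j => C (p i) * X j) g = C (p i) ^ n * g := by
    rw [aeval_mul_left_of_isHomogeneous hg, aeval_X_left_apply]
  have hp : aeval (fun j => X i * C (p j)) g = C (eval p g) * X i ^ n := by
    rw [aeval_mul_left_of_isHomogeneous hg, mul_comm]
    exact congrArg (· * X i ^ n) (aeval_algebraMap_apply (MvPolynomial σ R) p g)
  rw [← hX, ← hp]
  exact aeval_sub_aeval_mem hJ g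

lemma exists_isHomogeneous_eq_mul_of_dvd [CommSemiring R] {l g : MvPolynomial σ R} {m n : ℕ}
    (hl : l.IsHomogeneous m) (hg : g.IsHomogeneous (m + n)) (h : l ∣ g) :
    ∃ q : MvPolynomial σ R, q.IsHomogeneous n ∧ g = l * q := by
  obtain ⟨q, rfl⟩ := h
  refine ⟨homogeneousComponent n q, homogeneousComponent_isHomogeneous n q, ?_⟩
  let := gradedAlgebra (σ := σ) (R := R)
  calc l * q = homogeneousComponent (m + n) (l * q) := (homogeneousComponent_eq_self hg).symm
    _ = l * homogeneousComponent n q := by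
      rw [← decomposition.decompose'_apply, ← decomposition.decompose'_apply]
      exact DirectSum.coe_decompose_mul_add_of_left_mem (homogeneousSubmodule σ R) hl

lemma exists_eval_ne_zero_of_ne_zero [CommRing R] [IsDomain R] [Infinite R]
    {f : MvPolynomial σ R} (hf : f ≠ 0) : ∃ p, eval p f ≠ 0 := by
  contrapose! hf
  exact MvPolynomial.funext fun p => by rw [hf p, map_zero]

lemma exists_isHomogeneous_mem_eval_eq [Field K] {I : Ideal (MvPolynomial σ K)}
    {f : MvPolynomial σ K} {d e : ℕ} (hfI : f ∈ I) (hf : f.IsHomogeneous d) (hde : d ≤ e)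
    {p : σ → K} (hp : p ≠ 0) (hfp : eval p f ≠ 0) (c : K) :
    ∃ h ∈ I, h.IsHomogeneous e ∧ eval p h = c := by
  obtain ⟨i, hi⟩ := Function.ne_iff.mp hp
  obtain ⟨k, rfl⟩ := Nat.exists_eq_add_of_le' hde
  refine ⟨C (c / (p i ^ k * eval p f)) * (X i ^ k * f), ?_, ?_, ?_⟩
  · exact I.mul_mem_left _ (I.mul_mem_left _ hfI)
  · exact ((isHomogeneous_X_pow i k).mul hf).C_mul _
  · simp only [map_mul, map_pow, eval_C, eval_X]
    exact div_mul_cancel₀ c (mul_ne_zero (pow_ne_zero k hi) hfp)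

end HomogeneousEvaluation

section BinaryForms

/-- The linear form `a y - b x` in two variables that vanishes at the point `p = (a, b)`; up to
scalars it is the only one when `p ≠ 0`. -/
noncomputable def linearFormThrough {R : Type*} [CommRing R] (p : Fin 2 → R) :
    MvPolynomial (Fin 2) R :=
  C (p 0) * X 1 - C (p 1) * X 0

lemma linearFormThrough_isHomogeneous {R : Type*} [CommRing R] (p : Fin 2 → R) :
    (linearFormThrough p).IsHomogeneous 1 :=
  (isHomogeneous_C_mul_X (p 0) 1).sub (isHomogeneous_C_mul_X (p 1) 0)

lemma linearFormThrough_ne_zero {R : Type*} [CommRing R] {p : Fin 2 → R} (hp : p ≠ 0) :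
    linearFormThrough p ≠ 0 := by
  intro h
  have h₀ : p 0 = 0 := by simpa [linearFormThrough] using congrArg (eval ![0, 1]) h
  have h₁ : p 1 = 0 := by simpa [linearFormThrough] using congrArg (eval ![1, 0]) h
  exact hp (funext (Fin.forall_fin_two.mpr ⟨h₀, h₁⟩))

lemma linearFormThrough_dvd_minor {R : Type*} [CommRing R] (p : Fin 2 → R) :
    ∀ i j, linearFormThrough p ∣ C (p i) * X j - X i * C (p j) := by
  simp only [Fin.forall_fin_two, linearFormThrough]
  exact ⟨⟨⟨0, by ring⟩, ⟨1, by ring⟩⟩, ⟨-1, by ring⟩, ⟨0, by ring⟩⟩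

lemma linearFormThrough_dvd_of_eval_eq_zero {K : Type*} [Field K] {p : Fin 2 → K} (hp : p ≠ 0)
    {n : ℕ} {g : MvPolynomial (Fin 2) K} (hg : g.IsHomogeneous n) (hgp : eval p g = 0) :
    linearFormThrough p ∣ g := by
  obtain ⟨i, hi⟩ := Function.ne_iff.mp hp
  have hmem := C_pow_mul_sub_C_eval_mul_X_pow_mem hg fun j =>
    Ideal.mem_span_singleton.mpr (linearFormThrough_dvd_minor p i j)
  rw [hgp, C_0, zero_mul, sub_zero, Ideal.mem_span_singleton] at hmem
  exact (((isUnit_iff_ne_zero.mpr hi).map C).pow n).dvd_mul_left.mp hmem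

end BinaryForms

section GradedPieces

variable {K : Type} [Field K]

lemma mem_quotPiece {σ : Type} {I : Ideal (MvPolynomial σ K)} {d : ℕ}
    {y : MvPolynomial σ K ⧸ I} :
    y ∈ quotPiece I d ↔ ∃ g : MvPolynomial σ K, g.IsHomogeneous d ∧ Ideal.Quotient.mk I g = y :=
  Iff.rfl

lemma eq_zero_of_mul_eq_zero_of_mem_quotPiece {σ : Type} {I : Ideal (MvPolynomial σ K)}
    {l : MvPolynomial σ K} {m i : ℕ} (hl : l.IsHomogeneous m) (hl0 : l ≠ 0)
    (hI : ∀ f ∈ I, f.IsHomogeneous (i + m) → f = 0) :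
    ∀ x ∈ quotPiece I i, Ideal.Quotient.mk I l * x = 0 → x = 0 := by
  intro x hx hlx
  obtain ⟨g, hg, rfl⟩ := mem_quotPiece.mp hx
  rw [← map_mul, Ideal.Quotient.eq_zero_iff_mem, mul_comm] at hlx
  have hgl : g * l = 0 := hI _ hlx (hg.mul hl)
  rw [(mul_eq_zero.mp hgl).resolve_right hl0, map_zero]

lemma exists_linearFormThrough_mul_eq {I : Ideal (MvPolynomial (Fin 2) K)}
    {f : MvPolynomial (Fin 2) K} {d i : ℕ} (hfI : f ∈ I) (hf : f.IsHomogeneous d)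
    (hdi : d ≤ i + 1) {p : Fin 2 → K} (hp : p ≠ 0) (hfp : eval p f ≠ 0) :
    ∀ y ∈ quotPiece I (i + 1),
      ∃ x ∈ quotPiece I i, Ideal.Quotient.mk I (linearFormThrough p) * x = y := by
  intro y hy
  obtain ⟨g, hg, rfl⟩ := mem_quotPiece.mp hy
  obtain ⟨h, hhI, hh, hhp⟩ := exists_isHomogeneous_mem_eval_eq hfI hf hdi hp hfp (eval p g)
  have hgh : (g - h).IsHomogeneous (i + 1) := hg.sub hh
  have hdvd : linearFormThrough p ∣ g - h :=
    linearFormThrough_dvd_of_eval_eq_zero hp hgh (by rw [map_sub, hhp, sub_self])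
  obtain ⟨q, hq, hghq⟩ := exists_isHomogeneous_eq_mul_of_dvd
    (linearFormThrough_isHomogeneous p) (add_comm i 1 ▸ hgh) hdvd
  refine ⟨Ideal.Quotient.mk I q, mem_quotPiece.mpr ⟨q, hq, rfl⟩, ?_⟩
  rw [← map_mul, ← hghq, map_sub, Ideal.Quotient.eq_zero_iff_mem.mpr hhI, sub_zero]

end GradedPieces

theorem wlp_in_two_variables_general {K : Type} [Field K] [Infinite K]
    (I : Ideal (MvPolynomial (Fin 2) K)) :
    ∃ l ∈ homogeneousSubmodule (Fin 2) K 1, ∀ i : ℕ,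
      (∀ x ∈ quotPiece I i, Ideal.Quotient.mk I l * x = 0 → x = 0) ∨
      (∀ y ∈ quotPiece I (i + 1), ∃ x ∈ quotPiece I i, Ideal.Quotient.mk I l * x = y) := by
  classical
  by_cases hform : ∃ d : ℕ, ∃ f ∈ I, f.IsHomogeneous d ∧ f ≠ 0
  · obtain ⟨f, hfI, hf, hf0⟩ := Nat.find_spec hform
    obtain ⟨p, hp⟩ := exists_eval_ne_zero_of_ne_zero (mul_ne_zero (X_ne_zero (0 : Fin 2)) hf0)
    rw [map_mul, eval_X] at hp
    have hp0 : p ≠ 0 := Function.ne_iff.mpr ⟨0, left_ne_zero_of_mul hp⟩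
    have hl := linearFormThrough_isHomogeneous p
    refine ⟨linearFormThrough p, hl, fun i => ?_⟩
    rcases lt_or_ge (i + 1) (Nat.find hform) with hi | hi
    · have hmin := Nat.find_min hform hi
      push Not at hmin
      exact Or.inl (eq_zero_of_mul_eq_zero_of_mem_quotPiece hl (linearFormThrough_ne_zero hp0) hmin)
    · exact Or.inr (exists_linearFormThrough_mul_eq hfI hf hi hp0 (right_ne_zero_of_mul hp))
  · push Not at hform
    exact ⟨X 0, isHomogeneous_X K 0, fun i => Or.inl
      (eq_zero_of_mul_eq_zero_of_mem_quotPiece (isHomogeneous_X K 0) (X_ne_zero 0) (hform (i + 1)))⟩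

/-- every Artinian standard graded quotient of `K[x,y]`, `char K = 0`, has WLP. -/
theorem wlp_in_two_variables {K : Type} [Field K] [CharZero K]
    (I : Ideal (MvPolynomial (Fin 2) K)) (hIhom : IsHomogeneousIdeal I)
    (hArt : ∃ N : ℕ, ∀ i ≥ N, quotPiece I i = ⊥) :
    ∃ l ∈ homogeneousSubmodule (Fin 2) K 1, ∀ i : ℕ,
      (∀ x ∈ quotPiece I i, Ideal.Quotient.mk I l * x = 0 → x = 0) ∨
      (∀ y ∈ quotPiece I (i + 1), ∃ x ∈ quotPiece I i, Ideal.Quotient.mk I l * x = y) :=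
  wlp_in_two_variables_general I
end

section
/- Let S = Q[x_0,x_1,x_2,x_3] and let X ⊂ P^3(Q) be the eight points with homogeneous coordinates [1:0:0:0], [0:1:0:0], [0:0:1:0], [1:1:0:0], [1:0:1:0], [0:1:1:0], [1:1:1:0], [0:0:0:1]. Let L ∈ S_1 be a linear form with L(p) ≠ 0 for every p ∈ X and x_3 ∉ (L), and set A = S/(I_X + (L)). Then A fails the Weak Lefschetz Property: for every linear form l ∈ A_1 the multiplication map ·l : A_1 → A_2 is neither injective nor surjective. -/
/-!
Let `P = [0:0:0:1]` and let `J = I_X + (L)`. The form `x₃` vanishes at every point of `X` other than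
`P`.

*Injectivity.* For a linear form `l`, a scalar `c` can be chosen with `(l - c L)(P) = 0`, and then
`(l - c L) x₃` vanishes on all of `X`, so `l x₃ ∈ J`: the class of `x₃` is a socle element of `A`.
It is not zero, because `X` spans `ℙ³`, so that `J` and `(L)` have the same linear forms.

*Surjectivity.* A quadric through `X` contains the plane `x₃ = 0`, as no conic of that plane passes
through the seven coplanar points. Hence every quadric in `J` vanishes on the line `x₃ = L = 0`.
This line meets the plane `l = 0` in a point, at which all quadrics representing elements of `l A₁`
vanish, while some `xᵢ²` does not.
-/

open MvPolynomial

/-- The homogeneous vanishing ideal of a set of (affine representatives of) points of `ℙ³`. -/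
noncomputable def projVanishingIdeal (Y : Set (Fin 4 → ℚ)) : Ideal (MvPolynomial (Fin 4) ℚ) :=
  Ideal.span {f | (∃ d : ℕ, f ∈ homogeneousSubmodule (Fin 4) ℚ d) ∧ ∀ p ∈ Y, eval p f = 0}

/-- The eight points of the motivating example: seven points on the plane `x₃ = 0`
together with `[0:0:0:1]`. -/
def eightPoints : Set (Fin 4 → ℚ) :=
  {![1,0,0,0], ![0,1,0,0], ![0,0,1,0], ![1,1,0,0],
   ![1,0,1,0], ![0,1,1,0], ![1,1,1,0], ![0,0,0,1]}

section LinearAndQuadraticForms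

variable {σ R : Type*}

lemma exists_linearMap_eq_eval [CommSemiring R] {f : MvPolynomial σ R} (hf : f.IsHomogeneous 1) :
    ∃ φ : (σ → R) →ₗ[R] R, ∀ p, φ p = eval p f := by
  rw [← mem_homogeneousSubmodule, homogeneousSubmodule_one_eq_span_X] at hf
  induction hf using Submodule.span_induction with
  | mem f hf =>
    obtain ⟨i, rfl⟩ := hf
    exact ⟨LinearMap.proj i, by simp⟩
  | zero => exact ⟨0, by simp⟩
  | add f g _ _ hf hg =>
    obtain ⟨φ, hφ⟩ := hf
    obtain ⟨ψ, hψ⟩ := hg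
    exact ⟨φ + ψ, by simp [hφ, hψ]⟩
  | smul a f _ hf =>
    obtain ⟨φ, hφ⟩ := hf
    exact ⟨a • φ, by simp [hφ]⟩

lemma exists_quadraticForm_eq_eval [CommSemiring R] {f : MvPolynomial σ R}
    (hf : f.IsHomogeneous 2) : ∃ Q : QuadraticForm R (σ → R), ∀ p, Q p = eval p f := by
  rw [← mem_homogeneousSubmodule, ← homogeneousSubmodule_one_pow, pow_two] at hf
  induction hf using Submodule.mul_induction_on' with
  | mem_mul_mem f hf g hg =>
    obtain ⟨φ, hφ⟩ := exists_linearMap_eq_eval hf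
    obtain ⟨ψ, hψ⟩ := exists_linearMap_eq_eval hg
    exact ⟨QuadraticMap.linMulLin φ ψ, by simp [hφ, hψ]⟩
  | add f _ g _ hf hg =>
    obtain ⟨Q, hQ⟩ := hf
    obtain ⟨Q', hQ'⟩ := hg
    exact ⟨Q + Q', by simp [hQ, hQ']⟩

lemma eval_linearForm_eq_zero_of_mem_span [CommSemiring R] {f : MvPolynomial σ R}
    (hf : f.IsHomogeneous 1) {s : Set (σ → R)} (hs : ∀ q ∈ s, eval q f = 0) {p : σ → R}
    (hp : p ∈ Submodule.span R s) : eval p f = 0 := by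
  obtain ⟨φ, hφ⟩ := exists_linearMap_eq_eval hf
  have hle : Submodule.span R s ≤ LinearMap.ker φ :=
    Submodule.span_le.2 fun q hq => (hφ q).trans (hs q hq)
  exact (hφ p).symm.trans (hle hp)

lemma exists_ne_zero_forall_eval_eq_zero {K ι : Type*} [Field K] [Fintype σ] [Fintype ι]
    (hcard : Fintype.card ι < Fintype.card σ) {f : ι → MvPolynomial σ K}
    (hf : ∀ i, (f i).IsHomogeneous 1) : ∃ p ≠ 0, ∀ i, eval p (f i) = 0 := by
  choose φ hφ using fun i => exists_linearMap_eq_eval (hf i)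
  have hker : LinearMap.ker (LinearMap.pi φ) ≠ ⊥ :=
    LinearMap.ker_ne_bot_of_finrank_lt (by simpa using hcard)
  obtain ⟨p, hp, hp0⟩ := Submodule.exists_mem_ne_zero_of_ne_bot hker
  exact ⟨p, hp0, fun i => (hφ i p).symm.trans (congrFun hp i)⟩

lemma quadraticMap_eq_zero_of_mem_span {M N ι : Type*} [CommRing R] [AddCommGroup M]
    [AddCommGroup N] [Module R M] [Module R N] (Q : QuadraticMap R M N) {v : ι → M}
    (hv : ∀ i, Q (v i) = 0) (hadd : Pairwise fun i j => Q (v i + v j) = 0) {x : M}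
    (hx : x ∈ Submodule.span R (Set.range v)) : Q x = 0 := by
  classical
  obtain ⟨c, rfl⟩ := Finsupp.mem_span_range_iff_exists_finsupp.1 hx
  rw [Finsupp.sum, QuadraticMap.map_sum]
  have hdiag : ∑ i ∈ c.support, Q (c i • v i) = 0 :=
    Finset.sum_eq_zero fun i _ => by rw [Q.map_smul, hv, smul_zero]
  rw [hdiag, zero_add]
  refine Finset.sum_eq_zero fun ij hij => ?_
  induction ij using Sym2.ind with
  | _ i j =>
    have hne : i ≠ j := (Finset.mem_filter.1 hij).2
    have hpolar : QuadraticMap.polar Q (v i) (v j) = 0 := by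
      simp [QuadraticMap.polar, hv, hadd hne]
    simp [hpolar]

lemma eval_quadraticForm_eq_zero_of_mem_span {ι : Type*} [CommRing R] {f : MvPolynomial σ R}
    (hf : f.IsHomogeneous 2) {v : ι → σ → R} (hv : ∀ i, eval (v i) f = 0)
    (hadd : Pairwise fun i j => eval (v i + v j) f = 0) {p : σ → R}
    (hp : p ∈ Submodule.span R (Set.range v)) : eval p f = 0 := by
  obtain ⟨Q, hQ⟩ := exists_quadraticForm_eq_eval hf
  simp only [← hQ] at hv hadd ⊢
  exact quadraticMap_eq_zero_of_mem_span Q hv hadd hp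

end LinearAndQuadraticForms

section HomogeneousIdeals

attribute [local instance] MvPolynomial.gradedAlgebra

lemma exists_isHomogeneous_sub_mem_of_mem_sup {σ R : Type*} [CommRing R]
    {I J : Ideal (MvPolynomial σ R)} (hI : I.IsHomogeneous (homogeneousSubmodule σ R))
    (hJ : J.IsHomogeneous (homogeneousSubmodule σ R)) {f : MvPolynomial σ R} {d : ℕ}
    (hf : f.IsHomogeneous d) (hfIJ : f ∈ I ⊔ J) :
    ∃ g ∈ I, g.IsHomogeneous d ∧ f - g ∈ J := by
  obtain ⟨g, hg, h, hh, rfl⟩ := Submodule.mem_sup.1 hfIJ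
  refine ⟨homogeneousComponent d g, homogeneousComponent_mem_of_mem hI hg d,
    homogeneousComponent_isHomogeneous d g, ?_⟩
  have hcomp : g + h - homogeneousComponent d g = homogeneousComponent d h := by
    rw [sub_eq_iff_eq_add', ← map_add, homogeneousComponent_eq_self hf]
  exact hcomp ▸ homogeneousComponent_mem_of_mem hJ hh d

variable {Y : Set (Fin 4 → ℚ)}

lemma isHomogeneous_projVanishingIdeal (Y : Set (Fin 4 → ℚ)) :
    (projVanishingIdeal Y).IsHomogeneous (homogeneousSubmodule (Fin 4) ℚ) :=
  Ideal.homogeneous_span _ _ fun _ hf => hf.1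

lemma eval_eq_zero_of_mem_projVanishingIdeal {f : MvPolynomial (Fin 4) ℚ}
    (hf : f ∈ projVanishingIdeal Y) {q : Fin 4 → ℚ} (hq : q ∈ Y) : eval q f = 0 := by
  have hle : projVanishingIdeal Y ≤ RingHom.ker (eval q) :=
    Ideal.span_le.2 fun g hg => hg.2 q hq
  exact hle hf

lemma exists_eval_eq_zero_sub_mem_span {f L : MvPolynomial (Fin 4) ℚ} {d e : ℕ}
    (hf : f.IsHomogeneous d) (hL : L.IsHomogeneous e)
    (hfL : f ∈ projVanishingIdeal Y + Ideal.span {L}) :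
    ∃ g, g.IsHomogeneous d ∧ (∀ q ∈ Y, eval q g = 0) ∧ f - g ∈ Ideal.span {L} := by
  have hspan : (Ideal.span {L}).IsHomogeneous (homogeneousSubmodule (Fin 4) ℚ) :=
    Ideal.homogeneous_span _ _ fun _ h => ⟨e, h ▸ hL⟩
  obtain ⟨g, hgY, hg, hfg⟩ :=
    exists_isHomogeneous_sub_mem_of_mem_sup (isHomogeneous_projVanishingIdeal Y) hspan hf hfL
  exact ⟨g, hg, fun q hq => eval_eq_zero_of_mem_projVanishingIdeal hgY hq, hfg⟩

lemma mul_mem_projVanishingIdeal_add_span {P : Fin 4 → ℚ} {l L m : MvPolynomial (Fin 4) ℚ}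
    {d e : ℕ} (hl : l.IsHomogeneous d) (hL : L.IsHomogeneous d) (hm : m.IsHomogeneous e)
    (hLP : eval P L ≠ 0) (hmY : ∀ q ∈ Y, q ≠ P → eval q m = 0) :
    l * m ∈ projVanishingIdeal Y + Ideal.span {L} := by
  set c : ℚ := eval P l / eval P L
  have hvanish : (l - C c * L) * m ∈ projVanishingIdeal Y := by
    refine Ideal.subset_span ⟨⟨d + e, (hl.sub (hL.C_mul c)).mul hm⟩, fun q hq => ?_⟩
    obtain rfl | hqP := eq_or_ne q P
    · simp [c, div_mul_cancel₀ _ hLP]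
    · simp [hmY q hq hqP]
  have hsplit : l * m = (l - C c * L) * m + C c * m * L := by ring
  rw [hsplit]
  exact Submodule.add_mem_sup hvanish (Ideal.mul_mem_left _ _ (Ideal.mem_span_singleton_self L))

end HomogeneousIdeals

section MultiplicationMaps

variable {K σ : Type} [Field K] {I : Ideal (MvPolynomial σ K)} {l : MvPolynomial σ K} {d e : ℕ}

lemma not_injective_mul_of_mul_mem {m : MvPolynomial σ K} (hm : m.IsHomogeneous d) (hmI : m ∉ I)
    (hlm : l * m ∈ I) :
    ¬ ∀ x ∈ quotPiece I d, Ideal.Quotient.mk I l * x = 0 → x = 0 := by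
  intro hinj
  refine hmI (Ideal.Quotient.eq_zero_iff_mem.1 (hinj _ ⟨m, hm, rfl⟩ ?_))
  exact Ideal.Quotient.eq_zero_iff_mem.2 hlm

lemma not_surjective_mul_of_eval_eq_zero (hl : l.IsHomogeneous d) {p : σ → K} (hp : p ≠ 0)
    (hlp : eval p l = 0) (hIp : ∀ f ∈ I, f.IsHomogeneous (d + e) → eval p f = 0) :
    ¬ ∀ y ∈ quotPiece I (d + e), ∃ x ∈ quotPiece I e, Ideal.Quotient.mk I l * x = y := by
  intro hsurj
  obtain ⟨i, hi⟩ := Function.ne_iff.1 hp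
  have hX : (X i ^ (d + e) : MvPolynomial σ K).IsHomogeneous (d + e) := isHomogeneous_X_pow i _
  obtain ⟨_, ⟨m, hm, rfl⟩, hlm⟩ := hsurj _ ⟨_, hX, rfl⟩
  have hmem : l * m - X i ^ (d + e) ∈ I := Ideal.Quotient.eq.1 hlm
  have heval := hIp _ hmem ((hl.mul hm).sub hX)
  have hpow : p i ^ (d + e) = 0 := by simpa [hlp] using heval
  exact hi (eq_zero_of_pow_eq_zero hpow)

end MultiplicationMaps

section EightPoints

lemma eval_X_three_eq_zero_of_mem_eightPoints {q : Fin 4 → ℚ} (hq : q ∈ eightPoints)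
    (hq' : q ≠ ![0, 0, 0, 1]) : eval q (X 3) = 0 := by
  simp only [eightPoints, Set.mem_insert_iff, Set.mem_singleton_iff] at hq
  rcases hq with rfl | rfl | rfl | rfl | rfl | rfl | rfl | rfl <;> simp_all

lemma span_eightPoints : Submodule.span ℚ eightPoints = ⊤ := by
  rw [← top_le_iff, ← (Pi.basisFun ℚ (Fin 4)).span_eq, Submodule.span_le]
  rintro _ ⟨i, rfl⟩
  apply Submodule.subset_span
  fin_cases i <;> simp [eightPoints, funext_iff, Fin.forall_fin_succ]

lemma linearForm_eq_zero_of_eval_eightPoints {f : MvPolynomial (Fin 4) ℚ} (hf : f.IsHomogeneous 1)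
    (hfX : ∀ q ∈ eightPoints, eval q f = 0) : f = 0 :=
  hf.eq_zero_of_forall_eval_eq_zero fun _ =>
    eval_linearForm_eq_zero_of_mem_span hf hfX (span_eightPoints ▸ Submodule.mem_top)

lemma eval_quadraticForm_eq_zero_of_eval_eightPoints {f : MvPolynomial (Fin 4) ℚ}
    (hf : f.IsHomogeneous 2) (hfX : ∀ q ∈ eightPoints, eval q f = 0) {p : Fin 4 → ℚ}
    (hp : p 3 = 0) : eval p f = 0 := by
  let v : Fin 3 → Fin 4 → ℚ := ![![1, 0, 0, 0], ![0, 1, 0, 0], ![0, 0, 1, 0]]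
  have hv : ∀ i, v i ∈ eightPoints := by
    intro i
    fin_cases i <;> simp [v, eightPoints]
  have hadd : Pairwise fun i j => v i + v j ∈ eightPoints := by
    intro i j hij
    fin_cases i <;> fin_cases j <;> simp [v, eightPoints] at hij ⊢
  have hspan : p ∈ Submodule.span ℚ (Set.range v) := by
    refine Submodule.mem_span_range_iff_exists_fun ℚ |>.2 ⟨![p 0, p 1, p 2], ?_⟩
    ext i
    fin_cases i <;> simp [v, Fin.sum_univ_three, hp]
  exact eval_quadraticForm_eq_zero_of_mem_span hf (fun i => hfX _ (hv i))
    (fun i j hij => hfX _ (hadd hij)) hspan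

variable {L l : MvPolynomial (Fin 4) ℚ}

lemma mem_span_of_mem_projVanishingIdeal_eightPoints_add_span {f : MvPolynomial (Fin 4) ℚ}
    (hf : f.IsHomogeneous 1) {d : ℕ} (hL : L.IsHomogeneous d)
    (hfL : f ∈ projVanishingIdeal eightPoints + Ideal.span {L}) : f ∈ Ideal.span {L} := by
  obtain ⟨g, hg, hgX, hfg⟩ := exists_eval_eq_zero_sub_mem_span hf hL hfL
  rwa [linearForm_eq_zero_of_eval_eightPoints hg hgX, sub_zero] at hfg

lemma eval_eq_zero_of_mem_projVanishingIdeal_eightPoints_add_span {f : MvPolynomial (Fin 4) ℚ}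
    (hf : f.IsHomogeneous 2) {d : ℕ} (hL : L.IsHomogeneous d)
    (hfL : f ∈ projVanishingIdeal eightPoints + Ideal.span {L}) {p : Fin 4 → ℚ} (hp : p 3 = 0)
    (hLp : eval p L = 0) : eval p f = 0 := by
  obtain ⟨g, hg, hgX, hfg⟩ := exists_eval_eq_zero_sub_mem_span hf hL hfL
  obtain ⟨h, hh⟩ := Ideal.mem_span_singleton.1 hfg
  rw [sub_eq_iff_eq_add.1 hh, map_add, map_mul, hLp, zero_mul, zero_add,
    eval_quadraticForm_eq_zero_of_eval_eightPoints hg hgX hp]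

lemma eight_points_not_injective (hL : L.IsHomogeneous 1) (hLP : eval ![0, 0, 0, 1] L ≠ 0)
    (hx3L : X 3 ∉ Ideal.span {L}) (hl : l.IsHomogeneous 1) :
    ¬ ∀ x ∈ quotPiece (projVanishingIdeal eightPoints + Ideal.span {L}) 1,
        Ideal.Quotient.mk (projVanishingIdeal eightPoints + Ideal.span {L}) l * x = 0 → x = 0 :=
  have hX : (X 3 : MvPolynomial (Fin 4) ℚ).IsHomogeneous 1 := isHomogeneous_X ℚ 3
  not_injective_mul_of_mul_mem hX
    (fun hmem => hx3L (mem_span_of_mem_projVanishingIdeal_eightPoints_add_span hX hL hmem))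
    (mul_mem_projVanishingIdeal_add_span hl hL hX hLP
      fun _ => eval_X_three_eq_zero_of_mem_eightPoints)

lemma eight_points_not_surjective (hL : L.IsHomogeneous 1) (hl : l.IsHomogeneous 1) :
    ¬ ∀ y ∈ quotPiece (projVanishingIdeal eightPoints + Ideal.span {L}) 2,
        ∃ x ∈ quotPiece (projVanishingIdeal eightPoints + Ideal.span {L}) 1,
          Ideal.Quotient.mk (projVanishingIdeal eightPoints + Ideal.span {L}) l * x = y := by
  have hforms : ∀ i, (![X 3, L, l] i).IsHomogeneous 1 := by
    simp [Fin.forall_fin_succ, isHomogeneous_X, hL, hl]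
  obtain ⟨p, hp, hzero⟩ := exists_ne_zero_forall_eval_eq_zero (by simp) hforms
  have hp3 : p 3 = 0 := by simpa using hzero 0
  exact not_surjective_mul_of_eval_eq_zero (e := 1) hl hp (hzero 2) fun f hfJ hf =>
    eval_eq_zero_of_mem_projVanishingIdeal_eightPoints_add_span hf hL hfJ hp3 (hzero 1)

end EightPoints

theorem eight_points_fail_WLP_general
    (L : MvPolynomial (Fin 4) ℚ) (hL : L ∈ homogeneousSubmodule (Fin 4) ℚ 1)
    (hLP : eval ![0, 0, 0, 1] L ≠ 0)
    (hx3L : (X 3 : MvPolynomial (Fin 4) ℚ) ∉ Ideal.span {L}) :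
    ∀ l ∈ homogeneousSubmodule (Fin 4) ℚ 1,
      ¬ (∀ x ∈ quotPiece (projVanishingIdeal eightPoints + Ideal.span {L}) 1,
          Ideal.Quotient.mk (projVanishingIdeal eightPoints + Ideal.span {L}) l * x = 0 →
            x = 0) ∧
      ¬ (∀ y ∈ quotPiece (projVanishingIdeal eightPoints + Ideal.span {L}) 2,
          ∃ x ∈ quotPiece (projVanishingIdeal eightPoints + Ideal.span {L}) 1,
            Ideal.Quotient.mk (projVanishingIdeal eightPoints + Ideal.span {L}) l * x = y) :=
  fun _ hl => ⟨eight_points_not_injective hL hLP hx3L hl, eight_points_not_surjective hL hl⟩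

/-- the Artinian reduction of the eight points fails WLP
from degree 1 to degree 2. -/
theorem eight_points_fail_WLP
    (L : MvPolynomial (Fin 4) ℚ) (hL : L ∈ homogeneousSubmodule (Fin 4) ℚ 1)
    (hLX : ∀ p ∈ eightPoints, eval p L ≠ 0)
    (hx3L : (X 3 : MvPolynomial (Fin 4) ℚ) ∉ Ideal.span {L}) :
    ∀ l ∈ homogeneousSubmodule (Fin 4) ℚ 1,
      ¬ (∀ x ∈ quotPiece (projVanishingIdeal eightPoints + Ideal.span {L}) 1,
          Ideal.Quotient.mk (projVanishingIdeal eightPoints + Ideal.span {L}) l * x = 0 →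
            x = 0) ∧
      ¬ (∀ y ∈ quotPiece (projVanishingIdeal eightPoints + Ideal.span {L}) 2,
          ∃ x ∈ quotPiece (projVanishingIdeal eightPoints + Ideal.span {L}) 1,
            Ideal.Quotient.mk (projVanishingIdeal eightPoints + Ideal.span {L}) l * x = y) := by
  exact eight_points_fail_WLP_general L hL (hLX _ (by simp [eightPoints])) hx3L
end
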